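/- Let n = 2m with n ≥ 4 and let Cay(D_n, S) be a normal Cayley graph over the dihedral group D_n. Let u and v be distinct vertex labels and let τ be a positive integer. Then PST occurs between u and v at time τ if and only if (u,v) ∈ (G_0 × G_0) ∪ (G_1 × G_1), u − v = ±m, and: (i) T_τ(μ̃_1) = T_τ(μ̃_2) = 1 and T_τ(μ̃_3) = T_τ(μ̃_4) = (−1)^m; (ii) T_τ(η_h(S_1)/d) = (−1)^h for all integers h with 1 ≤ h ≤ m−1. -/

import Mathlib

/-!
Since `S` is closed under conjugation, `T_τ(P)` commutes with all left and right translations of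
`D_n`. If it sends `e_u` to `e_v`, then it sends `e_1` to `e_c` with `c = v u⁻¹` invariant under
conjugation, so `c` is the unique nontrivial central element `a^m`. Conversely `T_τ(P)` sends `e_1`
to `e_c` exactly when it is the translation by `c`.

To decide when `T_τ(P)` is the translation by `a^m`, compare eigenvalues. For each frequency
`h ∈ ℤ/n` and each sign `ε = ±1`, the vector with entries `ω^{hk}` on rotations and `ε ω^{hk}` on
reflections is an eigenvector of `P` with eigenvalue `(η_h(S_1) + ε η_h(S_2)) / d`, and an
eigenvector of the translation with eigenvalue `ω^{hm} = (-1)^h`. These vectors span by Fourier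
inversion. For `h = 0` and `h = m` the eigenvalues are the four `μ̃_i`; for the other `h` the sum
`η_h(S_2)` vanishes because `S_2` is invariant under multiplication by `a^2`, and the symmetry
`h ↦ -h` leaves the range `1 ≤ h ≤ m - 1`.
-/

open Polynomial Matrix

noncomputable section

namespace PaperPST

/-! ### Grover-walk PST data for Cayley graphs over a general finite group -/

/-- The adjacency matrix of the Cayley graph `Cay(Γ, S)`: `A u v = 1` iff `u * v⁻¹ ∈ S`. -/
def adjG (Γ : Type*) [Group Γ] [Fintype Γ] [DecidableEq Γ] (S : Finset Γ) : Matrix Γ Γ ℂ :=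
  Matrix.of fun u v => if u * v⁻¹ ∈ S then 1 else 0

/-- The discriminant matrix `P = (1/|S|) A` of `Cay(Γ, S)`. -/
def discG (Γ : Type*) [Group Γ] [Fintype Γ] [DecidableEq Γ] (S : Finset Γ) : Matrix Γ Γ ℂ :=
  (S.card : ℂ)⁻¹ • adjG Γ S

/-- `T_τ(P)`, the `τ`-th Chebyshev polynomial of the first kind evaluated at the
discriminant matrix of `Cay(Γ, S)`. -/
def chebG (Γ : Type*) [Group Γ] [Fintype Γ] [DecidableEq Γ] (S : Finset Γ) (τ : ℕ) :
    Matrix Γ Γ ℂ :=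
  Polynomial.aeval (discG Γ S) (Polynomial.Chebyshev.T ℂ τ)

/-- Perfect state transfer between vertices `u` and `v` of `Cay(Γ, S)` at time `τ`:
`T_τ(P) e_u = e_v`. -/
def PSTG (Γ : Type*) [Group Γ] [Fintype Γ] [DecidableEq Γ] (S : Finset Γ) (τ : ℕ)
    (u v : Γ) : Prop :=
  chebG Γ S τ *ᵥ Pi.single u 1 = Pi.single v 1

/-- Evaluation of the `τ`-th Chebyshev polynomial of the first kind at a complex number. -/
def Teval (τ : ℕ) (x : ℂ) : ℂ := (Polynomial.Chebyshev.T ℂ τ).eval x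

/-! ### Specialization to the dihedral group `D_n` -/

/-- Test whether an element of the dihedral group is a rotation `a^k`. -/
def isRot {n : ℕ} : DihedralGroup n → Bool
  | .r _ => true
  | .sr _ => false

/-- The adjacency matrix of the Cayley graph `Cay(D_n, S)`. -/
def adjC (n : ℕ) (S : Finset (DihedralGroup n)) :
    Matrix (DihedralGroup n) (DihedralGroup n) ℂ :=
  Matrix.of fun u v => if u * v⁻¹ ∈ S then 1 else 0

/-- The discriminant matrix `P = (1/|S|) A` of `Cay(D_n, S)`. -/
def disc (n : ℕ) (S : Finset (DihedralGroup n)) :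
    Matrix (DihedralGroup n) (DihedralGroup n) ℂ :=
  (S.card : ℂ)⁻¹ • adjC n S

/-- `T_τ(P)`, the `τ`-th Chebyshev polynomial of the first kind evaluated at the
discriminant matrix. -/
def chebP (n : ℕ) [NeZero n] (S : Finset (DihedralGroup n)) (τ : ℕ) :
    Matrix (DihedralGroup n) (DihedralGroup n) ℂ :=
  Polynomial.aeval (disc n S) (Polynomial.Chebyshev.T ℂ τ)

/-- Perfect state transfer between vertices `u` and `v` of `Cay(D_n, S)` at time `τ`:
`T_τ(P) e_u = e_v`. -/
def PST (n : ℕ) [NeZero n] (S : Finset (DihedralGroup n)) (τ : ℕ)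
    (u v : DihedralGroup n) : Prop :=
  chebP n S τ *ᵥ Pi.single u 1 = Pi.single v 1

/-- `ω = e^{2πi/n}`. -/
def omega (n : ℕ) : ℂ := Complex.exp (2 * Real.pi * Complex.I / n)

/-- `η_h(C) = Σ_{0 ≤ k ≤ n-1, a^k ∈ C} ω^{hk}`. -/
def eta (n : ℕ) (h : ℕ) (C : Finset (DihedralGroup n)) : ℂ :=
  ∑ k ∈ Finset.range n, if DihedralGroup.r (k : ZMod n) ∈ C then omega n ^ (h * k) else 0

/-- `S_1 = S ∩ ⟨a⟩`. -/
def S1 (n : ℕ) (S : Finset (DihedralGroup n)) : Finset (DihedralGroup n) :=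
  S.filter fun x => isRot x

/-- `S_2 = bS ∩ ⟨a⟩`, i.e. `{a^k : b a^k ∈ S}`. -/
def S2 (n : ℕ) (S : Finset (DihedralGroup n)) : Finset (DihedralGroup n) :=
  (S.image fun s => DihedralGroup.sr 0 * s).filter fun x => isRot x

/-- `S_2⁻¹ = {s⁻¹ : s ∈ S_2}`. -/
def S2inv (n : ℕ) (S : Finset (DihedralGroup n)) : Finset (DihedralGroup n) :=
  (S2 n S).image fun x => x⁻¹

/-- The number of `a^k ∈ C` with `0 ≤ k ≤ n-1` and `k % 2 = p`. -/
def dcnt (n : ℕ) (C : Finset (DihedralGroup n)) (p : ℕ) : ℕ :=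
  ((Finset.range n).filter fun k => k % 2 = p ∧ DihedralGroup.r (k : ZMod n) ∈ C).card

/-- Vertex labels `0, …, 2n-1`: label `u < n` is `a^u`, and label `n ≤ u < 2n` is `b a^{u-n}`. -/
def lab (n : ℕ) (u : ℕ) : DihedralGroup n :=
  if u < n then DihedralGroup.r (u : ZMod n) else DihedralGroup.sr ((u - n : ℕ) : ZMod n)

/-- `Cay(D_n, S)` is a normal Cayley graph if `S` is closed under conjugation. -/
def IsNormalCay (n : ℕ) (S : Finset (DihedralGroup n)) : Prop :=
  ∀ g : DihedralGroup n, ∀ s ∈ S, g * s * g⁻¹ ∈ S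

/-- `Cay(D_n, S)` exhibits PST at the minimum time `τ`. -/
def exhibitsMinPST (n : ℕ) [NeZero n] (S : Finset (DihedralGroup n)) (τ : ℕ) : Prop :=
  (∃ u v : DihedralGroup n, u ≠ v ∧ PST n S τ u v) ∧
  ∀ σ : ℕ, 1 ≤ σ → σ < τ → ∀ u v : DihedralGroup n, u ≠ v → ¬ PST n S σ u v

/-! ### Eigenvector candidates -/

/-- The all-ones vector. -/
def w1 (n : ℕ) : DihedralGroup n → ℂ := fun _ => 1

/-- The vector which is `1` on `G_0` and `-1` on `G_1`. -/
def w2 (n : ℕ) : DihedralGroup n → ℂ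
  | .r _ => 1
  | .sr _ => -1

/-- The vector with entry `(-1)^k` at `a^k` and `(-1)^k` at `b a^k`. -/
def w3 (n : ℕ) : DihedralGroup n → ℂ
  | .r k => (-1) ^ k.val
  | .sr k => (-1) ^ k.val

/-- The vector with entry `(-1)^k` at `a^k` and `(-1)^{k+1}` at `b a^k`. -/
def w4 (n : ℕ) : DihedralGroup n → ℂ
  | .r k => (-1) ^ k.val
  | .sr k => (-1) ^ (k.val + 1)

/-- The vector with entry `ω^{hk}` at `a^k` and `0` at `b a^k`. -/
def uv1 (n h : ℕ) : DihedralGroup n → ℂ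
  | .r k => omega n ^ (h * k.val)
  | .sr _ => 0

/-- The vector with entry `0` at `a^k` and `ω^{hk}` at `b a^k`. -/
def uv2 (n h : ℕ) : DihedralGroup n → ℂ
  | .r _ => 0
  | .sr k => omega n ^ (h * k.val)

/-- The vector with entry `0` at `a^k` and `ω^{-hk}` at `b a^k`. -/
def uv3 (n h : ℕ) : DihedralGroup n → ℂ
  | .r _ => 0
  | .sr k => (omega n)⁻¹ ^ (h * k.val)

/-- The vector with entry `ω^{-hk}` at `a^k` and `0` at `b a^k`. -/
def uv4 (n h : ℕ) : DihedralGroup n → ℂ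
  | .r k => (omega n)⁻¹ ^ (h * k.val)
  | .sr _ => 0

/-- The vector with entry `conj(ℓ)·ω^{hk}` at `a^k` and `ω^{hk}` at `b a^k`. -/
def vv1 (n h : ℕ) (ℓ : ℂ) : DihedralGroup n → ℂ
  | .r k => (starRingEnd ℂ) ℓ * omega n ^ (h * k.val)
  | .sr k => omega n ^ (h * k.val)

/-- The vector with entry `ω^{-hk}` at `a^k` and `conj(ℓ)·ω^{-hk}` at `b a^k`. -/
def vv2 (n h : ℕ) (ℓ : ℂ) : DihedralGroup n → ℂ
  | .r k => (omega n)⁻¹ ^ (h * k.val)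
  | .sr k => (starRingEnd ℂ) ℓ * (omega n)⁻¹ ^ (h * k.val)

/-- The vector with entry `-ω^{hk}` at `a^k` and `ℓ·ω^{hk}` at `b a^k`. -/
def vv3 (n h : ℕ) (ℓ : ℂ) : DihedralGroup n → ℂ
  | .r k => -(omega n ^ (h * k.val))
  | .sr k => ℓ * omega n ^ (h * k.val)

/-- The vector with entry `ℓ·ω^{-hk}` at `a^k` and `-ω^{-hk}` at `b a^k`. -/
def vv4 (n h : ℕ) (ℓ : ℂ) : DihedralGroup n → ℂ
  | .r k => ℓ * (omega n)⁻¹ ^ (h * k.val)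
  | .sr k => -((omega n)⁻¹ ^ (h * k.val))

/-! ### Perfect state transfer for conjugation-invariant connection sets -/

section Matrix

variable {ι R : Type*} [Fintype ι] [DecidableEq ι]

lemma aeval_mulVec_of_mulVec_eq_smul [CommRing R] {M : Matrix ι ι R} {f : ι → R} {μ : R}
    (h : M *ᵥ f = μ • f) (p : R[X]) : aeval M p *ᵥ f = p.eval μ • f := by
  have hlin : toLinAlgEquiv' (aeval M p) = aeval (toLinAlgEquiv' M) p :=
    (aeval_algHom_apply (toLinAlgEquiv' (R := R) (n := ι)) M p).symm
  rw [← toLinAlgEquiv'_apply, hlin]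
  exact Module.End.aeval_apply_of_mem_apply_eq_smul h

lemma aeval_submatrix_equiv [CommSemiring R] (M : Matrix ι ι R) (e : ι ≃ ι) (p : R[X]) :
    aeval (M.submatrix e e) p = (aeval M p).submatrix e e :=
  aeval_algHom_apply (reindexAlgEquiv R R e.symm) M p

end Matrix

section Group

lemma conj_mem_iff {Γ : Type*} [Group Γ] {S : Finset Γ} (hS : ∀ g, ∀ s ∈ S, g * s * g⁻¹ ∈ S)
    (g : Γ) {s : Γ} : g * s * g⁻¹ ∈ S ↔ s ∈ S :=
  ⟨fun hs => by simpa [mul_assoc] using hS g⁻¹ _ hs, hS g s⟩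

variable {Γ : Type*} [Group Γ] [Fintype Γ] [DecidableEq Γ] {S : Finset Γ} {τ : ℕ}

lemma adjG_mulVec_apply (S : Finset Γ) (f : Γ → ℂ) (x : Γ) :
    (adjG Γ S *ᵥ f) x = ∑ s ∈ S, f (s⁻¹ * x) := by
  have hsum : (adjG Γ S *ᵥ f) x = ∑ y, if x * y⁻¹ ∈ S then f y else 0 := by
    simp [adjG, mulVec, dotProduct]
  rw [hsum, ← ((Equiv.inv Γ).trans (Equiv.mulRight x)).sum_comp]
  simp

lemma chebG_mulVec_of_discG_mulVec {f : Γ → ℂ} {μ : ℂ} (h : discG Γ S *ᵥ f = μ • f) (τ : ℕ) :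
    chebG Γ S τ *ᵥ f = Teval τ μ • f :=
  aeval_mulVec_of_mulVec_eq_smul h _

lemma pstg_iff_apply {u v : Γ} :
    PSTG Γ S τ u v ↔ ∀ x, chebG Γ S τ x u = if x = v then 1 else 0 := by
  simp [PSTG, funext_iff, Pi.single_apply]

lemma PSTG.right_unique {u v w : Γ} (hv : PSTG Γ S τ u v) (hw : PSTG Γ S τ u w) : v = w := by
  by_contra hne
  have hval : (Pi.single v 1 : Γ → ℂ) v = (Pi.single w 1 : Γ → ℂ) v := by rw [← hv, ← hw]
  simp [hne] at hval

variable (hS : ∀ g, ∀ s ∈ S, g * s * g⁻¹ ∈ S)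

include hS in
lemma chebG_mul_mul (g h x y : Γ) :
    chebG Γ S τ (g * x * h) (g * y * h) = chebG Γ S τ x y := by
  let e : Γ ≃ Γ := (Equiv.mulLeft g).trans (Equiv.mulRight h)
  have hdisc : (discG Γ S).submatrix e e = discG Γ S := by
    ext a b
    have hquot : g * a * h * (g * b * h)⁻¹ = g * (a * b⁻¹) * g⁻¹ := by group
    simp only [submatrix_apply, discG, adjG, Matrix.smul_apply, of_apply, e,
      Equiv.trans_apply, Equiv.coe_mulLeft, Equiv.coe_mulRight, hquot, conj_mem_iff hS]
  have hcheb := aeval_submatrix_equiv (discG Γ S) e (Chebyshev.T ℂ τ)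
  rw [hdisc] at hcheb
  exact (congrFun₂ hcheb x y).symm

include hS in
lemma PSTG.mul_mul {u v : Γ} (huv : PSTG Γ S τ u v) (g h : Γ) :
    PSTG Γ S τ (g * u * h) (g * v * h) := by
  rw [pstg_iff_apply] at huv ⊢
  intro x
  have hx : g * (g⁻¹ * x * h⁻¹) * h = x := by group
  rw [← hx, chebG_mul_mul hS, huv]
  simp

-- Conjugation by `g` fixes `1` and preserves transfer, so it fixes the target of `1`.
include hS in
theorem pstg_iff_center {u v : Γ} :
    PSTG Γ S τ u v ↔ v * u⁻¹ ∈ Subgroup.center Γ ∧ PSTG Γ S τ 1 (v * u⁻¹) := by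
  refine ⟨fun huv => ?_, fun ⟨_, h⟩ => by simpa using h.mul_mul hS 1 u⟩
  have hone : PSTG Γ S τ 1 (v * u⁻¹) := by simpa using huv.mul_mul hS 1 u⁻¹
  refine ⟨Subgroup.mem_center_iff.2 fun g => ?_, hone⟩
  have hconj : PSTG Γ S τ 1 (g * (v * u⁻¹) * g⁻¹) := by simpa using hone.mul_mul hS g g⁻¹
  exact mul_inv_eq_iff_eq_mul.1 (hconj.right_unique hone)

include hS in
theorem pstg_one_iff_mulVec {z : Γ} :
    PSTG Γ S τ 1 z ↔ ∀ f : Γ → ℂ, chebG Γ S τ *ᵥ f = fun x => f (z⁻¹ * x) := by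
  refine ⟨fun hz f => funext fun x => ?_, fun h => ?_⟩
  · have hentry (y : Γ) : chebG Γ S τ x y = if y = z⁻¹ * x then 1 else 0 := by
      rw [← chebG_mul_mul hS 1 y⁻¹, one_mul, one_mul, mul_inv_cancel, pstg_iff_apply.1 hz]
      simp only [mul_inv_eq_iff_eq_mul, eq_inv_mul_iff_mul_eq, eq_comm (a := x)]
    simp [mulVec, dotProduct, hentry]
  · rw [PSTG, h]
    ext x
    simp [Pi.single_apply, inv_mul_eq_iff_eq_mul]

include hS in
theorem pstg_one_iff_eigenvalue {ι : Type*} {z : Γ} {b : ι → Γ → ℂ} {μ χ : ι → ℂ}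
    (hspan : Submodule.span ℂ (Set.range b) = ⊤) (hb : ∀ i, b i ≠ 0)
    (hμ : ∀ i, discG Γ S *ᵥ b i = μ i • b i)
    (hχ : ∀ i, (fun x => b i (z⁻¹ * x)) = χ i • b i) :
    PSTG Γ S τ 1 z ↔ ∀ i, Teval τ (μ i) = χ i := by
  have hcheb (i : ι) := chebG_mulVec_of_discG_mulVec (hμ i) τ
  rw [pstg_one_iff_mulVec hS]
  refine ⟨fun h i => smul_left_injective ℂ (hb i) ?_, fun h f => ?_⟩
  · exact (hcheb i).symm.trans ((h (b i)).trans (hχ i))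
  · have heq : (chebG Γ S τ).mulVecLin = LinearMap.funLeft ℂ ℂ (z⁻¹ * ·) := by
      refine LinearMap.ext_on_range hspan fun i => ?_
      exact (hcheb i).trans ((congrArg (· • b i) (h i)).trans (hχ i).symm)
    exact LinearMap.congr_fun heq f

end Group

/-! ### Fourier analysis on the dihedral group -/

section ZMod

lemma sum_range_natCast_zmod {n : ℕ} [NeZero n] {M : Type*} [AddCommMonoid M] (f : ZMod n → M) :
    ∑ k ∈ Finset.range n, f k = ∑ k, f k :=
  Finset.sum_nbij' (fun k => k) ZMod.val (by simp) (fun k _ => by simpa using k.val_lt)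
    (fun _ hk => ZMod.val_cast_of_lt (Finset.mem_range.1 hk)) (by simp) (by simp)

lemma stdAddChar_natCast {n : ℕ} [NeZero n] (k : ℕ) :
    (ZMod.stdAddChar (k : ZMod n) : ℂ) = omega n ^ k := by
  rw [← Int.cast_natCast, ZMod.stdAddChar_coe, omega, ← Complex.exp_nat_mul]
  congr 1
  push_cast
  ring

lemma sum_stdAddChar_neg_mul_stdAddChar {n : ℕ} [NeZero n] (j k : ZMod n) :
    ∑ h : ZMod n, (ZMod.stdAddChar (-h * j) * ZMod.stdAddChar (h * k) : ℂ) =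
      if k = j then (n : ℂ) else 0 := by
  have horth := AddChar.sum_mulShift (k - j) (ZMod.isPrimitive_stdAddChar n)
  simp only [sub_eq_zero, ZMod.card, Nat.cast_ite, Nat.cast_zero] at horth
  simp only [← horth, ← AddChar.map_add_eq_mul]
  exact Finset.sum_congr rfl fun h _ => congrArg _ (by ring)

variable {n m : ℕ}

lemma neg_natCast_half (hnm : n = 2 * m) : -(m : ZMod n) = m := by
  rw [neg_eq_iff_add_eq_zero, ← Nat.cast_add, ← two_mul, ← hnm, ZMod.natCast_self]

lemma natCast_mul_two_ne_zero (hnm : n = 2 * m) {k : ℕ} (hk : 1 ≤ k) (hkm : k ≤ m - 1) :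
    (k * 2 : ZMod n) ≠ 0 := by
  rw [← Nat.cast_ofNat, ← Nat.cast_mul, Ne, ZMod.natCast_eq_zero_iff]
  exact Nat.not_dvd_of_pos_of_lt (by omega) (by omega)

variable [NeZero n]

lemma neg_eq_self_iff_eq_zero_or_half (hnm : n = 2 * m) {a : ZMod n} : -a = a ↔ a = 0 ∨ a = m := by
  refine ⟨fun h => ((ZMod.neg_eq_self_iff a).1 h).imp_right fun hval => ?_, ?_⟩
  · rw [← ZMod.natCast_zmod_val a]
    congr 1
    omega
  · rintro (rfl | rfl)
    exacts [neg_zero, neg_natCast_half hnm]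

lemma stdAddChar_natCast_mul_half (hnm : n = 2 * m) (k : ℕ) :
    (ZMod.stdAddChar (k * m : ZMod n) : ℂ) = (-1) ^ k := by
  have hm : (m : ℂ) ≠ 0 := Nat.cast_ne_zero.2 (by have := NeZero.ne n; omega)
  have homega : omega n ^ m = -1 := by
    rw [omega, ← Complex.exp_nat_mul, ← Complex.exp_pi_mul_I, hnm]
    congr 1
    push_cast
    field_simp
  rw [← Nat.cast_mul, stdAddChar_natCast, mul_comm, pow_mul, homega]

lemma forall_zmod_iff_of_neg (hnm : n = 2 * m) {p : ZMod n → Prop} (hp : ∀ h, p (-h) ↔ p h) :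
    (∀ h, p h) ↔ p 0 ∧ p m ∧ ∀ k : ℕ, 1 ≤ k → k ≤ m - 1 → p k := by
  refine ⟨fun H => ⟨H 0, H m, fun k _ _ => H k⟩, fun ⟨hzero, hhalf, hmid⟩ h => ?_⟩
  suffices habs : p (h.valMinAbs.natAbs : ZMod n) by
    rw [ZMod.natCast_natAbs_valMinAbs] at habs
    split_ifs at habs
    exacts [habs, (hp h).1 habs]
  have hle := h.natAbs_valMinAbs_le
  rcases Nat.eq_zero_or_pos h.valMinAbs.natAbs with h0 | hpos
  · rwa [h0, Nat.cast_zero]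
  rcases eq_or_ne h.valMinAbs.natAbs m with hm | hm
  · rwa [hm]
  · exact hmid _ hpos (by omega)

end ZMod

section Dihedral

open DihedralGroup

variable {n m : ℕ}

lemma r_mem_S1_iff {S : Finset (DihedralGroup n)} {k : ZMod n} : r k ∈ S1 n S ↔ r k ∈ S :=
  Finset.mem_filter.trans (and_iff_left rfl)

lemma sr_notMem_S1 {S : Finset (DihedralGroup n)} {k : ZMod n} : sr k ∉ S1 n S := fun hk => by
  simpa [isRot] using (Finset.mem_filter.1 hk).2

lemma r_mem_S2_iff {S : Finset (DihedralGroup n)} {k : ZMod n} : r k ∈ S2 n S ↔ sr k ∈ S := by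
  have himage := (mul_right_injective (sr 0)).mem_finset_image (s := S) (a := sr k)
  rw [sr_mul_sr, sub_zero] at himage
  exact Finset.mem_filter.trans ((and_iff_left rfl).trans himage)

lemma sr_notMem_S2 {S : Finset (DihedralGroup n)} {k : ZMod n} : sr k ∉ S2 n S := fun hk => by
  simpa [isRot] using (Finset.mem_filter.1 hk).2

lemma r_neg_mem_S1_iff {S : Finset (DihedralGroup n)} (hS : IsNormalCay n S) (k : ZMod n) :
    r (-k) ∈ S1 n S ↔ r k ∈ S1 n S := by
  simpa [r_mem_S1_iff] using conj_mem_iff hS (sr 0) (s := r k)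

lemma r_neg_mem_S2_iff {S : Finset (DihedralGroup n)} (hS : IsNormalCay n S) (k : ZMod n) :
    r (-k) ∈ S2 n S ↔ r k ∈ S2 n S := by
  simpa [r_mem_S2_iff] using conj_mem_iff hS (sr 0) (s := sr k)

lemma r_add_two_mem_S2_iff {S : Finset (DihedralGroup n)} (hS : IsNormalCay n S) (k : ZMod n) :
    r (k + 2) ∈ S2 n S ↔ r k ∈ S2 n S := by
  have hconj : r (-1) * sr k * (r (-1))⁻¹ = sr (k + 2) := by
    rw [r_mul_sr, inv_r, sr_mul_r]
    ring_nf
  rw [r_mem_S2_iff, r_mem_S2_iff, ← hconj, conj_mem_iff hS]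

variable [NeZero n]

lemma sum_dihedralGroup {M : Type*} [AddCommMonoid M] (f : DihedralGroup n → M) :
    ∑ x, f x = ∑ k, f (r k) + ∑ k, f (sr k) := by
  rw [← equivSum.symm.sum_comp, Fintype.sum_sum_type]
  rfl

lemma sum_eq_sum_S1_add_sum_S2 {M : Type*} [AddCommMonoid M] (S : Finset (DihedralGroup n))
    (f : DihedralGroup n → M) :
    ∑ s ∈ S, f s = ∑ k with r k ∈ S1 n S, f (r k) + ∑ k with r k ∈ S2 n S, f (sr k) := by
  simp only [r_mem_S1_iff, r_mem_S2_iff, Finset.sum_filter]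
  rw [← sum_dihedralGroup fun s => if s ∈ S then f s else 0]
  simp

/-- The character sum `η_h(C)` of the statement, with the frequency `h` taken in `ZMod n` so that
`h ↦ -h` makes sense. -/
def charSum (C : Finset (DihedralGroup n)) (h : ZMod n) : ℂ :=
  ∑ k with r k ∈ C, ZMod.stdAddChar (h * k)

lemma charSum_natCast (C : Finset (DihedralGroup n)) (h : ℕ) : charSum C h = eta n h C := by
  rw [charSum, eta, Finset.sum_filter, ← sum_range_natCast_zmod]
  simp only [← Nat.cast_mul, stdAddChar_natCast]

lemma charSum_neg {C : Finset (DihedralGroup n)} (hC : ∀ k, r (-k) ∈ C ↔ r k ∈ C) (h : ZMod n) :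
    charSum C (-h) = charSum C h := by
  simp only [charSum, Finset.sum_filter]
  rw [← Equiv.sum_comp (Equiv.neg (ZMod n))]
  simp [hC]

-- Translating by `a` preserves the sum and multiplies it by `ω ^ (h * a) ≠ 1`.
lemma charSum_eq_zero {C : Finset (DihedralGroup n)} {a h : ZMod n}
    (hC : ∀ k, r (k + a) ∈ C ↔ r k ∈ C) (ha : h * a ≠ 0) : charSum C h = 0 := by
  have hshift : charSum C h * ZMod.stdAddChar (h * a) = charSum C h := by
    simp only [charSum, Finset.sum_filter, Finset.sum_mul]
    conv_rhs => rw [← Equiv.sum_comp (Equiv.addRight a)]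
    simp [hC, mul_add, AddChar.map_add_eq_mul]
  have hchar : (ZMod.stdAddChar (h * a) : ℂ) ≠ 1 := fun h1 =>
    ha (ZMod.injective_stdAddChar (h1.trans (AddChar.map_zero_eq_one _).symm))
  exact (mul_right_eq_self₀.1 hshift).resolve_left hchar

lemma charSum_zero {C : Finset (DihedralGroup n)} (hC : ∀ {k}, sr k ∉ C) :
    charSum C 0 = C.card := by
  have hcard := sum_dihedralGroup fun x => if x ∈ C then (1 : ℂ) else 0
  simpa [charSum, hC] using hcard.symm

lemma charSum_half (hnm : n = 2 * m) (C : Finset (DihedralGroup n)) :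
    charSum C m = dcnt n C 0 - dcnt n C 1 := by
  simp only [charSum, dcnt, Finset.sum_filter, Finset.card_filter, Nat.cast_sum,
    ← Finset.sum_sub_distrib, ← sum_range_natCast_zmod]
  refine Finset.sum_congr rfl fun k _ => ?_
  rw [mul_comm, stdAddChar_natCast_mul_half hnm]
  rcases Nat.mod_two_eq_zero_or_one k with hk | hk
  · simp [hk, (Nat.even_iff.2 hk).neg_one_pow]
  · by_cases hkC : r (k : ZMod n) ∈ C <;> simp [hk, (Nat.odd_iff.2 hk).neg_one_pow, hkC]

/-- The vector with entry `ω^{hk}` at `a^k` and `ε ω^{hk}` at `b a^k`. Letting `ε` run through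
`ℤˣ = {1, -1}` gives a common eigenbasis for all normal Cayley graphs over `D_n`. -/
def fourierVec (h : ZMod n) (ε : ℤˣ) : DihedralGroup n → ℂ
  | r k => ZMod.stdAddChar (h * k)
  | sr k => ε * ZMod.stdAddChar (h * k)

/-- The eigenvalue of the discriminant matrix at `fourierVec h ε`. -/
def eigenvalue (S : Finset (DihedralGroup n)) (h : ZMod n) (ε : ℤˣ) : ℂ :=
  (charSum (S1 n S) h + ε * charSum (S2 n S) h) / S.card

lemma fourierVec_ne_zero (h : ZMod n) (ε : ℤˣ) : fourierVec h ε ≠ 0 := fun h0 => by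
  simpa [fourierVec] using congrFun h0 (r 0)

lemma sum_fourierVec_neg_mul_fourierVec (x y : DihedralGroup n) :
    ∑ h, ∑ ε, fourierVec (-h) ε x * fourierVec h ε y = if y = x then 2 * (n : ℂ) else 0 := by
  have hsum (j k : ZMod n) := sum_stdAddChar_neg_mul_stdAddChar j k
  simp only [neg_mul] at hsum
  rcases x with j | j <;> rcases y with k | k <;>
    simp [fourierVec, UnitsInt.univ, ← two_mul, ← Finset.mul_sum, hsum]

lemma span_fourierVec :
    Submodule.span ℂ (Set.range fun p : ZMod n × ℤˣ => fourierVec p.1 p.2) = ⊤ := by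
  rw [← (Pi.basisFun ℂ (DihedralGroup n)).span_eq]
  refine le_antisymm (by simp) (Submodule.span_le.2 ?_)
  rintro _ ⟨x, rfl⟩
  have hexpand : Pi.basisFun ℂ (DihedralGroup n) x =
      ∑ p : ZMod n × ℤˣ, (fourierVec (-p.1) p.2 x / (2 * n)) • fourierVec p.1 p.2 := by
    have hn : (2 * n : ℂ) ≠ 0 := mul_ne_zero two_ne_zero (NeZero.ne _)
    ext y
    simp only [Finset.sum_apply, Pi.smul_apply, smul_eq_mul, div_mul_eq_mul_div, ← Finset.sum_div,
      Fintype.sum_prod_type, sum_fourierVec_neg_mul_fourierVec]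
    simp [Pi.single_apply, hn, ite_div]
  rw [hexpand]
  exact Submodule.sum_mem _ fun p _ => Submodule.smul_mem _ _ (Submodule.subset_span ⟨p, rfl⟩)

lemma adjG_mulVec_fourierVec {S : Finset (DihedralGroup n)} (hS : IsNormalCay n S) (h : ZMod n)
    (ε : ℤˣ) : adjG (DihedralGroup n) S *ᵥ fourierVec h ε =
      (charSum (S1 n S) h + ε * charSum (S2 n S) h) • fourierVec h ε := by
  have hε : (ε : ℂ) * ε = 1 := by exact_mod_cast Int.units_coe_mul_self ε
  have hS1 := charSum_neg (r_neg_mem_S1_iff hS) h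
  have hS2 := charSum_neg (r_neg_mem_S2_iff hS) h
  ext x
  rw [adjG_mulVec_apply, sum_eq_sum_S1_add_sum_S2, Pi.smul_apply, smul_eq_mul, add_mul]
  rcases x with i | i
  · nth_rw 1 [← hS1]
    simp [charSum, fourierVec, mul_add, AddChar.map_add_eq_mul, Finset.sum_mul, Finset.mul_sum,
      mul_assoc]
  · nth_rw 1 [← hS2]
    have hcancel (c z : ℂ) : ε * c * (ε * z) = c * z := by linear_combination c * z * hε
    simp [charSum, fourierVec, hcancel, sub_eq_add_neg, mul_add, AddChar.map_add_eq_mul,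
      Finset.mul_sum, mul_comm, mul_left_comm]

lemma discG_mulVec_fourierVec {S : Finset (DihedralGroup n)} (hS : IsNormalCay n S) (h : ZMod n)
    (ε : ℤˣ) :
    discG (DihedralGroup n) S *ᵥ fourierVec h ε = eigenvalue S h ε • fourierVec h ε := by
  rw [discG, smul_mulVec, adjG_mulVec_fourierVec hS, smul_smul, eigenvalue, div_eq_inv_mul]

lemma fourierVec_r_half_inv_mul (hnm : n = 2 * m) (h : ZMod n) (ε : ℤˣ) :
    (fun x => fourierVec h ε ((r (m : ZMod n))⁻¹ * x)) =
      ZMod.stdAddChar (h * (m : ZMod n)) • fourierVec h ε := by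
  rw [inv_r, neg_natCast_half hnm]
  ext (k | k)
  · simp [fourierVec, mul_add, AddChar.map_add_eq_mul]
  · simp [fourierVec, sub_eq_add_neg, neg_natCast_half hnm, mul_add, AddChar.map_add_eq_mul,
      mul_comm, mul_left_comm]

lemma mem_center_iff_eq_one_or_r_half (hnm : n = 2 * m) (hn : n ≠ 2) {c : DihedralGroup n} :
    c ∈ Subgroup.center (DihedralGroup n) ↔ c = 1 ∨ c = r (m : ZMod n) := by
  rw [Subgroup.mem_center_iff]
  refine ⟨fun hc => ?_, ?_⟩
  · rcases c with i | i
    · have hconj : -i = i := by simpa using (hc (sr 0)).symm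
      exact ((neg_eq_self_iff_eq_zero_or_half hnm).1 hconj).imp (congrArg r) (congrArg r)
    · have htwo : (2 : ZMod n) = 0 := by
        have hconj : i - 1 = i + 1 := by simpa using hc (r 1)
        linear_combination -hconj
      rw [← Nat.cast_ofNat, ZMod.natCast_eq_zero_iff] at htwo
      have := Nat.le_of_dvd two_pos htwo
      have := NeZero.ne n
      omega
  · rintro (rfl | rfl) (g | g) <;> simp [add_comm, sub_eq_add_neg, neg_natCast_half hnm]

theorem pst_iff_forall_eigenvalue (hnm : n = 2 * m) (hn : n ≠ 2) {S : Finset (DihedralGroup n)}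
    (hS : IsNormalCay n S) {x y : DihedralGroup n} (hxy : x ≠ y) {τ : ℕ} :
    PST n S τ x y ↔ y = r (m : ZMod n) * x ∧
      ∀ h ε, Teval τ (eigenvalue S h ε) = ZMod.stdAddChar (h * (m : ZMod n)) := by
  have hone : y * x⁻¹ ≠ 1 := fun h => hxy (mul_inv_eq_one.1 h).symm
  have htarget : PST n S τ x y ↔ y = r (m : ZMod n) * x ∧
      PSTG (DihedralGroup n) S τ 1 (r (m : ZMod n)) := by
    refine (pstg_iff_center hS).trans ?_
    rw [mem_center_iff_eq_one_or_r_half hnm hn, or_iff_right hone, mul_inv_eq_iff_eq_mul]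
    refine and_congr_right fun h => ?_
    rw [h, mul_inv_cancel_right]
  rw [htarget, pstg_one_iff_eigenvalue hS span_fourierVec (fun p => fourierVec_ne_zero p.1 p.2)
    (fun p => discG_mulVec_fourierVec hS p.1 p.2) fun p => fourierVec_r_half_inv_mul hnm p.1 p.2]
  exact and_congr_right fun _ => Prod.forall

/-! ### Evaluation of the eigenvalue conditions -/

variable {S : Finset (DihedralGroup n)} {τ : ℕ}

lemma eigenvalue_neg (hS : IsNormalCay n S) (h : ZMod n) (ε : ℤˣ) :
    eigenvalue S (-h) ε = eigenvalue S h ε := by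
  simp only [eigenvalue, charSum_neg (r_neg_mem_S1_iff hS), charSum_neg (r_neg_mem_S2_iff hS)]

lemma eigenvalue_natCast (hnm : n = 2 * m) (hS : IsNormalCay n S) {k : ℕ} (hk : 1 ≤ k)
    (hkm : k ≤ m - 1) (ε : ℤˣ) : eigenvalue S k ε = eta n k (S1 n S) / S.card := by
  rw [eigenvalue, charSum_natCast, charSum_eq_zero (r_add_two_mem_S2_iff hS)
    (natCast_mul_two_ne_zero hnm hk hkm), mul_zero, add_zero]

lemma eigenvalue_zero_one (hS : S.Nonempty) : eigenvalue S 0 1 = 1 := by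
  have hcard := sum_eq_sum_S1_add_sum_S2 S fun _ => (1 : ℂ)
  have hne : (S.card : ℂ) ≠ 0 := Nat.cast_ne_zero.2 hS.card_ne_zero
  rw [eigenvalue, div_eq_one_iff_eq hne]
  simpa [charSum] using hcard.symm

lemma eigenvalue_zero_neg_one :
    eigenvalue S 0 (-1) = ((S1 n S).card - (S2 n S).card) / S.card := by
  simp [eigenvalue, charSum_zero sr_notMem_S1, charSum_zero sr_notMem_S2, sub_eq_add_neg]

lemma eigenvalue_half_one (hnm : n = 2 * m) : eigenvalue S m 1 =
    (dcnt n (S1 n S) 0 - dcnt n (S1 n S) 1 + dcnt n (S2 n S) 0 - dcnt n (S2 n S) 1) / S.card := by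
  simp [eigenvalue, charSum_half hnm, add_sub_assoc]

lemma eigenvalue_half_neg_one (hnm : n = 2 * m) : eigenvalue S m (-1) =
    (dcnt n (S1 n S) 0 - dcnt n (S1 n S) 1 + dcnt n (S2 n S) 1 - dcnt n (S2 n S) 0) / S.card := by
  simp only [eigenvalue, charSum_half hnm, Units.val_neg, Units.val_one, Int.cast_neg, Int.cast_one]
  ring

lemma forall_teval_eigenvalue_iff (hnm : n = 2 * m) (hS : IsNormalCay n S) :
    (∀ h ε, Teval τ (eigenvalue S h ε) = ZMod.stdAddChar (h * (m : ZMod n))) ↔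
      (Teval τ (eigenvalue S 0 1) = 1 ∧ Teval τ (eigenvalue S 0 (-1)) = 1 ∧
        Teval τ (eigenvalue S m 1) = (-1) ^ m ∧ Teval τ (eigenvalue S m (-1)) = (-1) ^ m) ∧
      ∀ k : ℕ, 1 ≤ k → k ≤ m - 1 → Teval τ (eta n k (S1 n S) / S.card) = (-1) ^ k := by
  have hneg (h : ZMod n) :
      (∀ ε, Teval τ (eigenvalue S (-h) ε) = ZMod.stdAddChar (-h * (m : ZMod n))) ↔
        ∀ ε, Teval τ (eigenvalue S h ε) = ZMod.stdAddChar (h * (m : ZMod n)) := by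
    simp only [eigenvalue_neg hS, neg_mul_comm, neg_natCast_half hnm]
  have hmid {k : ℕ} (hk : 1 ≤ k) (hkm : k ≤ m - 1) :
      (∀ ε, Teval τ (eigenvalue S k ε) = ZMod.stdAddChar (k * m : ZMod n)) ↔
        Teval τ (eta n k (S1 n S) / S.card) = (-1) ^ k := by
    simp only [eigenvalue_natCast hnm hS hk hkm, stdAddChar_natCast_mul_half hnm, forall_const]
  have hunits {p : ℤˣ → Prop} : (∀ ε, p ε) ↔ p 1 ∧ p (-1) :=
    ⟨fun H => ⟨H 1, H (-1)⟩, fun H ε => (Int.units_eq_one_or ε).elim (· ▸ H.1) (· ▸ H.2)⟩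
  rw [forall_zmod_iff_of_neg hnm hneg]
  simp +contextual only [hmid]
  simp only [hunits, stdAddChar_natCast_mul_half hnm, zero_mul, AddChar.map_zero_eq_one, and_assoc]

end Dihedral

/-! ### Vertex labels -/

section Labels

open DihedralGroup

variable {n m u v : ℕ}

lemma lab_injOn : Set.InjOn (lab n) (Set.Iio (2 * n)) := by
  intro u hu v hv huv
  rw [Set.mem_Iio] at hu hv
  unfold lab at huv
  split_ifs at huv with hun hvn hvn
  · exact CharP.natCast_injOn_Iio (ZMod n) n hun hvn (r.inj huv)
  · have hsub := CharP.natCast_injOn_Iio (ZMod n) n (Set.mem_Iio.2 (by omega))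
      (Set.mem_Iio.2 (by omega)) (sr.inj huv)
    omega

lemma natCast_eq_half_add_natCast_iff (hnm : n = 2 * m) (hu : u < n) (hv : v < n) :
    (v : ZMod n) = m + u ↔ (u : ℤ) - v = m ∨ (u : ℤ) - v = -m := by
  rw [← Nat.cast_add, ZMod.natCast_eq_natCast_iff', Nat.mod_eq_of_lt hv]
  rcases lt_or_ge (m + u) n with hlt | hle
  · rw [Nat.mod_eq_of_lt hlt]
    omega
  · rw [Nat.mod_eq_sub_mod hle, Nat.mod_eq_of_lt (by omega)]
    omega

lemma lab_eq_r_half_mul_lab_iff (hnm : n = 2 * m) (hu : u < 2 * n) (hv : v < 2 * n) :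
    lab n v = r (m : ZMod n) * lab n u ↔
      ((u < n ∧ v < n) ∨ (n ≤ u ∧ n ≤ v)) ∧ ((u : ℤ) - v = m ∨ (u : ℤ) - v = -m) := by
  unfold lab
  split_ifs with hvn hun hun
  · rw [r_mul_r, r.injEq, natCast_eq_half_add_natCast_iff hnm hun hvn]
    omega
  · rw [r_mul_sr]
    exact iff_of_false (by simp) (by omega)
  · rw [r_mul_r]
    exact iff_of_false (by simp) (by omega)
  · rw [r_mul_sr, sr.injEq, sub_eq_add_neg, neg_natCast_half hnm, add_comm,
      natCast_eq_half_add_natCast_iff hnm (by omega) (by omega)]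
    omega

end Labels

theorem stmt_10 (n m : ℕ) [NeZero n] (hnm : n = 2 * m) (hn4 : 4 ≤ n)
    (S : Finset (DihedralGroup n)) (hS1 : (1 : DihedralGroup n) ∉ S)
    (hSinv : ∀ s ∈ S, s⁻¹ ∈ S) (hSne : S.Nonempty)
    (hnormal : IsNormalCay n S)
    (u v : ℕ) (hu : u < 2 * n) (hv : v < 2 * n) (huv : u ≠ v)
    (τ : ℕ) (hτ : 1 ≤ τ) :
    PST n S τ (lab n u) (lab n v) ↔
      ((u < n ∧ v < n) ∨ (n ≤ u ∧ n ≤ v)) ∧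
      ((u : ℤ) - (v : ℤ) = (m : ℤ) ∨ (u : ℤ) - (v : ℤ) = -(m : ℤ)) ∧
      (Teval τ 1 = 1 ∧ Teval τ ((((S1 n S).card : ℂ) - ((S2 n S).card : ℂ)) / (S.card : ℂ)) = 1 ∧
        Teval τ (((dcnt n (S1 n S) 0 : ℂ) - (dcnt n (S1 n S) 1 : ℂ) + (dcnt n (S2 n S) 0 : ℂ) - (dcnt n (S2 n S) 1 : ℂ)) / (S.card : ℂ)) = (-1 : ℂ) ^ m ∧
        Teval τ (((dcnt n (S1 n S) 0 : ℂ) - (dcnt n (S1 n S) 1 : ℂ) + (dcnt n (S2 n S) 1 : ℂ) - (dcnt n (S2 n S) 0 : ℂ)) / (S.card : ℂ)) = (-1 : ℂ) ^ m) ∧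
      (∀ h : ℕ, 1 ≤ h → h ≤ m - 1 →
        Teval τ (eta n h (S1 n S) / (S.card : ℂ)) = (-1 : ℂ) ^ h) := by
  have hne : lab n u ≠ lab n v := fun h => huv (lab_injOn hu hv h)
  rw [pst_iff_forall_eigenvalue hnm (by omega) hnormal hne, lab_eq_r_half_mul_lab_iff hnm hu hv,
    forall_teval_eigenvalue_iff hnm hnormal, eigenvalue_zero_one hSne, eigenvalue_zero_neg_one,
    eigenvalue_half_one hnm, eigenvalue_half_neg_one hnm, and_assoc]

end PaperPST
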